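/- arXiv:1707.00528 — 2 statements merged into one kernel-verified Lean document; each statement's English description precedes it below -/
import Mathlib

section
/- (Mass confinement in a light cone.) Let d ≥ 1 and let u : ℝ → 𝒮(ℝ^d; ℂ) be a Schwartz solution of the linear Schrödinger equation. Let A ⊆ ℝ^d be a nonempty set with supp u(0) ⊆ A, let ε > 0, and set γ = 2‖∇u(0)‖_{L²(ℝ^d)} / ε. Then for every t > 0, ‖u(t)‖_{L²(ℝ^d ∖ {x : dist(x,A) < γ t})} ≤ ε. -/
open MeasureTheory Filter
open scoped RealInnerProductSpace

noncomputable section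

abbrev Ed (d : ℕ) : Type := EuclideanSpace ℝ (Fin d)

/-- The `i`-th standard basis vector of `ℝ^d`. -/
def stdBasis {d : ℕ} (i : Fin d) : Ed d := EuclideanSpace.single i 1

/-- The `i`-th spatial partial derivative. -/
def pd {d : ℕ} (f : Ed d → ℂ) (i : Fin d) (x : Ed d) : ℂ :=
  fderiv ℝ f x (stdBasis i)

/-- The spatial Laplacian. -/
def lap {d : ℕ} (f : Ed d → ℂ) (x : Ed d) : ℂ :=
  ∑ i, pd (pd f i) i x

/-- Squared (Euclidean) pointwise norm of the spatial gradient. -/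
def gradNormSq {d : ℕ} (f : Ed d → ℂ) (x : Ed d) : ℝ :=
  ∑ i, ‖pd f i x‖ ^ 2

/-- `L²` norm of `f` restricted to a set `s`. -/
def L2On {d : ℕ} (s : Set (Ed d)) (f : Ed d → ℂ) : ℝ :=
  (∫ x in s, ‖f x‖ ^ 2) ^ (1/2 : ℝ)

/-- `L²` norm of `f` on all of `ℝ^d`. -/
def L2 {d : ℕ} (f : Ed d → ℂ) : ℝ :=
  (∫ x, ‖f x‖ ^ 2) ^ (1/2 : ℝ)

/-- `L²` norm of the spatial gradient of `f`. -/
def gradL2 {d : ℕ} (f : Ed d → ℂ) : ℝ :=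
  (∫ x, gradNormSq f x) ^ (1/2 : ℝ)

/-- Distance between two sets. -/
def setDist {d : ℕ} (A B : Set (Ed d)) : ℝ :=
  sInf (Set.image2 dist A B)

/-- A Schwartz solution of the linear Schrödinger equation:
smooth in time-space and `∂ₜ u = i Δ u`. -/
def IsLinSchrodSol (d : ℕ) (u : ℝ → SchwartzMap (Ed d) ℂ) : Prop :=
  ContDiff ℝ (⊤ : ℕ∞) (fun p : ℝ × Ed d => u p.1 p.2) ∧
  ∀ t x, deriv (fun s => u s x) t = Complex.I * lap (u t) x

/-- A Schwartz solution of the nonlinear Schrödinger equation with parameters `lam, σ`: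
smooth in time-space and `∂ₜ u = i (Δ u + lam |u|^σ u)`. -/
def IsNLSSol (d : ℕ) (lam σ : ℝ) (u : ℝ → SchwartzMap (Ed d) ℂ) : Prop :=
  ContDiff ℝ (⊤ : ℕ∞) (fun p : ℝ × Ed d => u p.1 p.2) ∧
  ∀ t x, deriv (fun s => u s x) t =
    Complex.I * (lap (u t) x + ((lam * ‖u t x‖ ^ σ : ℝ) : ℂ) * u t x)

open scoped ENNReal in
lemma baire_aux (f : ℝ → ℝ≥0∞) (hfin : ∀ t, f t ≠ ∞)
    (hcl : ∀ n : ℕ, IsClosed {t | f t ≤ n})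
    (hP : ∀ a b, a ≤ b → ∀ N : ℝ≥0∞, N ≠ ∞ → (∀ t ∈ Set.Icc a b, f t ≤ N) → f a = f b) :
    ∀ a b, f a = f b := by
  classical
  set U : Set ℝ := {t | ∃ N : ℝ≥0∞, N ≠ ∞ ∧ ∀ᶠ s in nhds t, f s ≤ N} with hU
  have hUo : IsOpen U := by
    rw [isOpen_iff_mem_nhds]
    rintro t ⟨N, hN, h⟩
    filter_upwards [eventually_eventually_nhds.2 h] with s hs
    exact ⟨N, hN, hs⟩
  have hUI : ∀ a b, a ≤ b → Set.Icc a b ⊆ U → f a = f b := by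
    intro a b hab hs
    have : ∃ N : ℝ≥0∞, N ≠ ∞ ∧ ∀ t ∈ Set.Icc a b, f t ≤ N := by
      refine isCompact_Icc.induction_on (p := fun S => ∃ N : ℝ≥0∞, N ≠ ∞ ∧ ∀ t ∈ S, f t ≤ N)
        ⟨0, by simp, by simp⟩ ?_ ?_ ?_
      · rintro s t hst ⟨N, hN, h⟩
        exact ⟨N, hN, fun x hx => h x (hst hx)⟩
      · rintro s t ⟨N, hN, h⟩ ⟨N', hN', h'⟩
        refine ⟨max N N', by simp [hN, hN'], ?_⟩
        rintro x (hx | hx)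
        · exact (h x hx).trans (le_max_left _ _)
        · exact (h' x hx).trans (le_max_right _ _)
      · intro x hx
        obtain ⟨N, hN, h⟩ := hs hx
        exact ⟨_, mem_nhdsWithin_of_mem_nhds h, N, hN, fun t ht => ht⟩
    obtain ⟨N, hN, h⟩ := this
    exact hP a b hab N hN h
  by_cases hE : (Uᶜ).Nonempty
  · exfalso
    have hEc : IsClosed Uᶜ := hUo.isClosed_compl
    haveI : CompleteSpace (Uᶜ : Set ℝ) := hEc.completeSpace_coe
    haveI : Nonempty (Uᶜ : Set ℝ) := hE.to_subtype
    obtain ⟨n, ⟨x, hxU⟩, hx⟩ := nonempty_interior_of_iUnion_of_closed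
      (f := fun n : ℕ => {t : (Uᶜ : Set ℝ) | f t ≤ n})
      (fun n => (hcl n).preimage continuous_subtype_val) (by
        ext t
        simp only [Set.mem_iUnion, Set.mem_setOf_eq, Set.mem_univ, iff_true]
        obtain ⟨n, hn⟩ := ENNReal.exists_nat_gt (hfin t)
        exact ⟨n, hn.le⟩)
    rw [mem_interior_iff_mem_nhds, Metric.mem_nhds_iff] at hx
    obtain ⟨r, hr, hball⟩ := hx
    have hb : ∀ y ∈ Uᶜ, dist y x < r → f y ≤ n := fun y hy hd =>
      hball (show (⟨y, hy⟩ : (Uᶜ : Set ℝ)) ∈ Metric.ball _ _ from hd)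
    apply hxU
    refine ⟨n, by simp, ?_⟩
    filter_upwards [Metric.ball_mem_nhds x hr] with t ht
    rw [Metric.mem_ball] at ht
    by_cases htU : t ∈ U
    swap
    · exact hb t htU ht
    rcases le_total t x with htx | htx
    · set S := Uᶜ ∩ Set.Icc t x with hS
      have hSc : IsCompact S := isCompact_Icc.inter_left hEc
      have hSn : S.Nonempty := ⟨x, hxU, htx, le_rfl⟩
      have hbm := hSc.sInf_mem hSn
      set b := sInf S
      have hlt : ∀ s, t ≤ s → s < b → s ∈ U := by
        intro s hs hsb
        by_contra hcon
        exact absurd (csInf_le hSc.bddBelow ⟨hcon, hs, hsb.le.trans hbm.2.2⟩) (not_le.2 hsb)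
      have heq : f t = f b := by
        refine hP t b hbm.2.1 (max (f t) (f b)) (by simp [hfin]) ?_
        intro s hs
        rcases hs.2.eq_or_lt with h | h
        · rw [h]; exact le_max_right _ _
        · rw [← hUI t s hs.1 (fun z hz => hlt z hz.1 (hz.2.trans_lt h))]
          exact le_max_left _ _
      rw [heq]
      refine hb b hbm.1 ?_
      have h1 := hbm.2.1
      have h2 := hbm.2.2
      rw [Real.dist_eq, abs_lt] at *
      constructor <;> linarith
    · set S := Uᶜ ∩ Set.Icc x t with hS
      have hSc : IsCompact S := isCompact_Icc.inter_left hEc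
      have hSn : S.Nonempty := ⟨x, hxU, le_rfl, htx⟩
      have hbm := hSc.sSup_mem hSn
      set b := sSup S
      have hlt : ∀ s, s ≤ t → b < s → s ∈ U := by
        intro s hs hsb
        by_contra hcon
        exact absurd (le_csSup hSc.bddAbove ⟨hcon, hbm.2.1.trans hsb.le, hs⟩) (not_le.2 hsb)
      have heq : f b = f t := by
        refine hP b t hbm.2.2 (max (f t) (f b)) (by simp [hfin]) ?_
        intro s hs
        rcases hs.1.eq_or_lt with h | h
        · rw [← h]; exact le_max_right _ _
        · rw [hUI s t hs.2 (fun z hz => hlt z hz.2 (h.trans_le hz.1))]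
          exact le_max_left _ _
      rw [← heq]
      refine hb b hbm.1 ?_
      have h1 := hbm.2.1
      have h2 := hbm.2.2
      rw [Real.dist_eq, abs_lt] at *
      constructor <;> linarith
  · rw [Set.not_nonempty_iff_eq_empty, Set.compl_empty_iff] at hE
    intro a b
    rcases le_total a b with h | h
    · exact hUI a b h (by simp [hE])
    · exact (hUI b a h (by simp [hE])).symm

open scoped Convolution in
lemma exists_weight {d : ℕ} (g : Ed d → ℝ) (K : NNReal) (hg : LipschitzWith K g)
    (hc : HasCompactSupport g) (δ : ℝ) (hδ : 0 < δ) :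
    ∃ ψ : Ed d → ℝ, ContDiff ℝ (⊤ : ℕ∞) ψ ∧ HasCompactSupport ψ ∧ LipschitzWith K ψ ∧
      ∀ x, |ψ x - g x| ≤ K * δ := by
  let φ : ContDiffBump (0 : Ed d) := ⟨δ / 2, δ, by positivity, by linarith⟩
  have hintg : ∀ x, Integrable (fun y => φ.normed volume y * g (x - y)) := by
    intro x
    refine Continuous.integrable_of_hasCompactSupport ?_ ?_
    · exact φ.continuous_normed.mul (hg.continuous.comp (by fun_prop))
    · exact φ.hasCompactSupport_normed.mul_right
  refine ⟨φ.normed volume ⋆[ContinuousLinearMap.lsmul ℝ ℝ, volume] g, ?_, ?_, ?_, ?_⟩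
  · exact φ.hasCompactSupport_normed.contDiff_convolution_left _ φ.contDiff_normed
      hg.continuous.locallyIntegrable
  · exact φ.hasCompactSupport_normed.convolution _ hc
  · refine LipschitzWith.of_dist_le_mul fun x x' => ?_
    rw [Real.dist_eq]
    simp only [convolution_def, ContinuousLinearMap.lsmul_apply, smul_eq_mul]
    rw [← integral_sub (hintg x) (hintg x')]
    calc _ ≤ ∫ y, φ.normed volume y * (K * dist x x') := by
          rw [← Real.norm_eq_abs]
          refine norm_integral_le_of_norm_le (φ.integrable_normed.mul_const _) ?_
          refine Eventually.of_forall fun y => ?_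
          rw [← mul_sub, norm_mul, Real.norm_of_nonneg (φ.nonneg_normed y)]
          refine mul_le_mul_of_nonneg_left ?_ (φ.nonneg_normed y)
          have := hg.dist_le_mul (x - y) (x' - y)
          rwa [dist_sub_right, Real.dist_eq] at this
      _ = _ := by rw [integral_mul_const, φ.integral_normed, one_mul]
  · intro x
    have := φ.dist_normed_convolution_le (μ := volume) (g := g) (x₀ := x) (ε := K * δ)
      hg.continuous.aestronglyMeasurable (by
        intro y hy
        refine (hg.dist_le_mul y x).trans ?_
        exact mul_le_mul_of_nonneg_left (Metric.mem_ball.1 hy).le K.2)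
    rwa [Real.dist_eq] at this

def Dv {d : ℕ} (v : ℝ × Ed d) (F : ℝ × Ed d → ℂ) (p : ℝ × Ed d) : ℂ := fderiv ℝ F p v

def ex {d : ℕ} (i : Fin d) : ℝ × Ed d := (0, stdBasis i)

structure Sol {d : ℕ} (F : ℝ × Ed d → ℂ) : Prop where
  smooth : ContDiff ℝ (⊤ : ℕ∞) F
  eq : ∀ p, Dv (1, 0) F p = Complex.I * ∑ i, Dv (ex i) (Dv (ex i) F) p

lemma Dv_smooth {d : ℕ} (v : ℝ × Ed d) {F : ℝ × Ed d → ℂ} (h : ContDiff ℝ (⊤ : ℕ∞) F) :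
    ContDiff ℝ (⊤ : ℕ∞) (Dv v F) := by
  unfold Dv
  exact (h.fderiv_right (m := ((⊤ : ℕ∞) : WithTop ℕ∞)) (by norm_cast)).clm_apply contDiff_const

lemma slice_hasFDerivAt {d : ℕ} {F : ℝ × Ed d → ℂ} (h : ContDiff ℝ (⊤ : ℕ∞) F) (t : ℝ) (x : Ed d) :
    HasFDerivAt (fun x => F (t, x))
      ((fderiv ℝ F (t, x)).comp (ContinuousLinearMap.inr ℝ ℝ (Ed d))) x := by
  have h1 : HasFDerivAt F (fderiv ℝ F (t, x)) (t, x) :=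
    (h.differentiable (by simp) (t, x)).hasFDerivAt
  exact h1.comp x (hasFDerivAt_prodMk_right t x)

lemma param_integral {d : ℕ} {P V : Type*} [NormedAddCommGroup P] [NormedSpace ℝ P] [ProperSpace P]
    [NormedAddCommGroup V] [NormedSpace ℝ V] [CompleteSpace V]
    (h : P × Ed d → V) (hh : ContDiff ℝ 1 h) (k : Set (Ed d)) (hk : IsCompact k)
    (h0 : ∀ p y, y ∉ k → h (p, y) = 0) (p : P) :
    DifferentiableAt ℝ (fun p => ∫ y, h (p, y)) p ∧
    ∀ v, fderiv ℝ (fun p => ∫ y, h (p, y)) p v = ∫ y, fderiv ℝ h (p, y) (v, 0) := by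
  set F' : P → Ed d → (P →L[ℝ] V) := fun p y =>
    (fderiv ℝ h (p, y)).comp (ContinuousLinearMap.inl ℝ P (Ed d)) with hF'
  have hcont : Continuous (fun q : P × Ed d => F' q.1 q.2) := by
    have := hh.continuous_fderiv (by simp)
    exact (this.comp (by fun_prop : Continuous fun q : P × Ed d => (q.1, q.2))).clm_comp
      continuous_const
  have hd : ∀ p y, HasFDerivAt (fun p => h (p, y)) (F' p y) p := by
    intro p y
    have h1 : HasFDerivAt h (fderiv ℝ h (p, y)) (p, y) :=
      (hh.differentiable (by simp) (p, y)).hasFDerivAt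
    exact h1.comp p (hasFDerivAt_prodMk_left p y)
  have hF0 : ∀ p y, y ∉ k → F' p y = 0 := by
    intro p y hy
    rw [← (hd p y).fderiv]
    have : (fun p => h (p, y)) = fun _ => 0 := funext fun p => h0 p y hy
    rw [this]; simp
  obtain ⟨C, hC⟩ := ((isCompact_closedBall p 1).prod hk).exists_bound_of_continuousOn
    hcont.continuousOn
  have hintg' : ∀ p, Integrable (F' p) := by
    intro p
    refine Continuous.integrable_of_hasCompactSupport (hcont.comp (by fun_prop : Continuous fun y => (p, y))) ?_
    exact HasCompactSupport.intro hk (hF0 p)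
  have key : HasFDerivAt (fun p => ∫ y, h (p, y)) (∫ y, F' p y) p := by
    refine hasFDerivAt_integral_of_dominated_of_fderiv_le (F := fun p y => h (p, y)) (F' := F')
      (s := Metric.closedBall p 1) (bound := k.indicator fun _ => C)
      (Metric.closedBall_mem_nhds p one_pos) ?_ ?_ ?_ ?_ ?_ ?_
    · refine Eventually.of_forall fun p => Continuous.aestronglyMeasurable ?_
      exact hh.continuous.comp (by fun_prop)
    · refine Continuous.integrable_of_hasCompactSupport (hh.continuous.comp (by fun_prop)) ?_
      exact HasCompactSupport.intro hk (h0 p)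
    · exact (hintg' p).aestronglyMeasurable
    · refine Eventually.of_forall fun y q hq => ?_
      by_cases hy : y ∈ k
      · rw [Set.indicator_of_mem hy]; exact hC (q, y) ⟨hq, hy⟩
      · rw [Set.indicator_of_notMem hy, hF0 q y hy]; simp
    · rw [integrable_indicator_iff hk.measurableSet]
      exact integrableOn_const hk.measure_lt_top.ne
    · exact Eventually.of_forall fun y q _ => hd q y
  refine ⟨key.differentiableAt, fun v => ?_⟩
  rw [key.fderiv, ContinuousLinearMap.integral_apply (hintg' p)]
  rfl

lemma integral_fderiv_zero {d : ℕ} {𝕜 : Type*} [RCLike 𝕜] (J : Ed d → 𝕜) (hJ : ContDiff ℝ 1 J) (hc : HasCompactSupport J)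
    (v : Ed d) : ∫ x, fderiv ℝ J x v = 0 := by
  have := integral_mul_fderiv_eq_neg_fderiv_mul_of_integrable (μ := (volume : Measure (Ed d)))
    (f := fun _ => (1 : 𝕜)) (g := J) (v := v) (by simp) ?_ ?_ (by simp)
    (fun x _ => hJ.differentiable (by simp) x)
  · simpa using this
  · simp only [one_mul]
    refine Continuous.integrable_of_hasCompactSupport
      ((hJ.continuous_fderiv (by simp)).clm_apply continuous_const) ?_
    exact hc.fderiv_apply (𝕜 := ℝ) v
  · simpa using hJ.continuous.integrable_of_hasCompactSupport hc

lemma inner_I_self (z : ℂ) : ⟪z, Complex.I * z⟫ = 0 := by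
  simp [Complex.inner]; ring

/-- derivative of the localized mass. -/
lemma flux_deriv {d : ℕ} {F : ℝ × Ed d → ℂ} (hF : Sol F) (ψ : Ed d → ℝ)
    (hψ : ContDiff ℝ (⊤ : ℕ∞) ψ) (hc : HasCompactSupport ψ) (t : ℝ) :
    HasDerivAt (fun t => ∫ x, ψ x ^ 2 * ‖F (t, x)‖ ^ 2)
      (-4 * ∫ x, ψ x * fderiv ℝ ψ x
        (∑ i, ⟪F (t, x), Complex.I * Dv (ex i) F (t, x)⟫ • stdBasis i)) t := by
  have hFs := hF.smooth
  have hD1 : ∀ i, ContDiff ℝ (⊤ : ℕ∞) (Dv (ex i) F) := fun i => Dv_smooth _ hFs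
  have hD2 : ∀ i, ContDiff ℝ (⊤ : ℕ∞) (Dv (ex i) (Dv (ex i) F)) := fun i => Dv_smooth _ (hD1 i)
  have hsl : ∀ {H : ℝ × Ed d → ℂ}, ContDiff ℝ (⊤ : ℕ∞) H →
    ContDiff ℝ (⊤ : ℕ∞) (fun x => H (t, x)) := fun hH => hH.comp (by fun_prop)
  -- step 1
  obtain ⟨hd, hv⟩ := param_integral (P := ℝ) (d := d) (fun q => ψ q.2 ^ 2 * ‖F q‖ ^ 2)
    (by
      have h1 : ContDiff ℝ 1 (fun q : ℝ × Ed d => ψ q.2) :=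
        (hψ.of_le (by norm_cast)).comp contDiff_snd
      have h2 : ContDiff ℝ 1 F := hFs.of_le (by norm_cast)
      exact (h1.pow 2).mul (h2.norm_sq ℝ))
    (tsupport ψ) hc
    (by intro p y hy; simp [image_eq_zero_of_notMem_tsupport hy]) t
  have hder := hd.hasDerivAt
  have e1 : deriv (fun t => ∫ x, ψ x ^ 2 * ‖F (t, x)‖ ^ 2) t
      = ∫ x, 2 * (ψ x ^ 2 * ⟪F (t, x), Complex.I * ∑ i, Dv (ex i) (Dv (ex i) F) (t, x)⟫) := by
    rw [← fderiv_apply_one_eq_deriv, hv 1]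
    congr 1
    ext x
    have h1 : HasFDerivAt (fun q : ℝ × Ed d => ψ q.2)
        ((fderiv ℝ ψ x).comp (ContinuousLinearMap.snd ℝ ℝ (Ed d))) (t, x) :=
      HasFDerivAt.comp (t, x) (g := ψ) (f := Prod.snd)
        ((hψ.differentiable (by simp) x).hasFDerivAt) hasFDerivAt_snd
    have h2 : HasFDerivAt F (fderiv ℝ F (t, x)) (t, x) :=
      (hFs.differentiable (by simp) (t, x)).hasFDerivAt
    have h5 : HasFDerivAt (fun q : ℝ × Ed d => ψ q.2 ^ 2 * ‖F q‖ ^ 2) _ (t, x) :=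
      (h1.pow 2).mul h2.norm_sq
    rw [h5.fderiv, ← hF.eq]
    simp [Dv]
    ring
  rw [e1] at hder
  -- step 2
  have e2 : ∀ i, ∫ x, (2 * (ψ x * (fderiv ℝ ψ x (stdBasis i) *
        ⟪F (t, x), Complex.I * Dv (ex i) F (t, x)⟫)) +
        ψ x ^ 2 * ⟪F (t, x), Complex.I * Dv (ex i) (Dv (ex i) F) (t, x)⟫) = 0 := by
    intro i
    have hJ : ContDiff ℝ 1 (fun x => ψ x ^ 2 * ⟪F (t, x), Complex.I * Dv (ex i) F (t, x)⟫) := by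
      have h1 : ContDiff ℝ 1 ψ := hψ.of_le (by norm_cast)
      have h2 : ContDiff ℝ 1 (fun x => F (t, x)) := (hsl hFs).of_le (by norm_cast)
      have h3 : ContDiff ℝ 1 (fun x => Dv (ex i) F (t, x)) :=
        (hsl (hD1 i)).of_le (by norm_cast)
      exact (h1.pow 2).mul (h2.inner ℝ (contDiff_const.mul h3))
    rw [← integral_fderiv_zero _ hJ ?_ (stdBasis i)]
    · congr 1
      ext x
      have h1 : HasFDerivAt ψ (fderiv ℝ ψ x) x := (hψ.differentiable (by simp) x).hasFDerivAt
      have h2 := slice_hasFDerivAt hFs t x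
      have h3 := (slice_hasFDerivAt (hD1 i) t x).const_mul Complex.I
      have h5 : HasFDerivAt
          (fun x => ψ x ^ 2 * ⟪F (t, x), Complex.I * Dv (ex i) F (t, x)⟫) _ x :=
        (h1.pow 2).mul (h2.inner ℝ h3)
      rw [h5.fderiv]
      have h4 := inner_I_self (Dv (ex i) F (t, x))
      simp only [Dv, ex] at h4
      simp [Dv, ex, -Complex.inner, h4]
      ring
    · refine HasCompactSupport.intro hc fun x hx => ?_
      simp [image_eq_zero_of_notMem_tsupport hx]
  have hcs : ∀ f : Ed d → ℝ, Continuous f → (∀ x, ψ x = 0 → f x = 0) → Integrable f := by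
    intro f hf h0
    refine hf.integrable_of_hasCompactSupport (HasCompactSupport.intro hc fun x hx => ?_)
    exact h0 x (image_eq_zero_of_notMem_tsupport hx)
  have cψ := hψ.continuous
  have cψ' : ∀ v, Continuous fun x => fderiv ℝ ψ x v := fun v =>
    (hψ.continuous_fderiv (by simp)).clm_apply continuous_const
  have cF := (hsl hFs).continuous
  have cD1 := fun i => (hsl (hD1 i)).continuous
  have cD2 := fun i => (hsl (hD2 i)).continuous
  have i1 : ∀ i, Integrable (fun x => 2 * (ψ x * (fderiv ℝ ψ x (stdBasis i) *
        ⟪F (t, x), Complex.I * Dv (ex i) F (t, x)⟫))) := fun i => hcs _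
      (continuous_const.mul (cψ.mul ((cψ' _).mul (cF.inner (continuous_const.mul (cD1 i))))))
      (by intro x hx; simp [hx])
  have i2 : ∀ i, Integrable (fun x =>
        ψ x ^ 2 * ⟪F (t, x), Complex.I * Dv (ex i) (Dv (ex i) F) (t, x)⟫) := fun i => hcs _
      ((cψ.pow 2).mul (cF.inner (continuous_const.mul (cD2 i))))
      (by intro x hx; simp [hx])
  refine hder.congr_deriv (Eq.symm ?_)
  have e3 : ∀ i, ∫ x, ψ x ^ 2 * ⟪F (t, x), Complex.I * Dv (ex i) (Dv (ex i) F) (t, x)⟫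
      = - ∫ x, 2 * (ψ x * (fderiv ℝ ψ x (stdBasis i) *
        ⟪F (t, x), Complex.I * Dv (ex i) F (t, x)⟫)) := by
    intro i
    have := e2 i
    rw [integral_add (i1 i) (i2 i)] at this
    linarith
  rw [integral_const_mul]
  simp_rw [Finset.mul_sum, inner_sum, Finset.mul_sum]
  rw [integral_finsetSum _ (fun i _ => i2 i), Finset.sum_congr rfl (fun i _ => e3 i),
    Finset.sum_neg_distrib, ← integral_finsetSum _ (fun i _ => i1 i)]
  simp_rw [map_sum, map_smul, ← Finset.mul_sum, integral_const_mul, smul_eq_mul]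
  have : ∀ x, ∑ i, ⟪F (t, x), Complex.I * Dv (ex i) F (t, x)⟫ * fderiv ℝ ψ x (stdBasis i)
    = ∑ i, fderiv ℝ ψ x (stdBasis i) * ⟪F (t, x), Complex.I * Dv (ex i) F (t, x)⟫ :=
    fun x => Finset.sum_congr rfl fun i _ => mul_comm _ _
  simp_rw [this]
  ring

open scoped ENNReal

def mass {d : ℕ} (F : ℝ × Ed d → ℂ) (t : ℝ) : ℝ≥0∞ := ∫⁻ x, ‖F (t, x)‖ₑ ^ 2

lemma mass_integrable {d : ℕ} {F : ℝ × Ed d → ℂ} (hF : Continuous F) {t : ℝ}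
    (h : mass F t ≠ ∞) : Integrable (fun x => ‖F (t, x)‖ ^ 2) := by
  have hc : Continuous fun x => F (t, x) := hF.comp (by fun_prop)
  refine ⟨(hc.norm.pow 2).aestronglyMeasurable, ?_⟩
  rw [hasFiniteIntegral_iff_enorm]
  refine lt_of_le_of_lt (le_of_eq ?_) h.lt_top
  simp [mass]

lemma mass_eq {d : ℕ} {F : ℝ × Ed d → ℂ} (hF : Continuous F) {t : ℝ}
    (h : mass F t ≠ ∞) : ∫ x, ‖F (t, x)‖ ^ 2 = (mass F t).toReal := by
  rw [integral_eq_lintegral_of_nonneg_ae (Eventually.of_forall fun x => by positivity)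
    (mass_integrable hF h).aestronglyMeasurable]
  congr 1
  unfold mass
  congr 1
  ext x
  rw [ENNReal.ofReal_pow (norm_nonneg _), ofReal_norm]

lemma norm_sum_stdBasis {d : ℕ} (a : Fin d → ℝ) :
    ‖∑ i, a i • (stdBasis i : Ed d)‖ = √(∑ i, a i ^ 2) := by
  rw [EuclideanSpace.norm_eq]
  congr 1
  refine Finset.sum_congr rfl fun i _ => ?_
  simp [stdBasis, Finset.sum_apply, Pi.single_apply]

lemma flux_bound {d : ℕ} {F : ℝ × Ed d → ℂ} (hF : Sol F) (ψ : Ed d → ℝ) (K : NNReal)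
    (hψ : ContDiff ℝ (⊤ : ℕ∞) ψ) (hc : HasCompactSupport ψ) (hK : LipschitzWith K ψ) (t : ℝ)
    (G : ℝ) (hG : 0 ≤ G) (hGt : ∑ i, mass (Dv (ex i) F) t ≤ ENNReal.ofReal (G ^ 2)) :
    |-4 * ∫ x, ψ x * fderiv ℝ ψ x
        (∑ i, ⟪F (t, x), Complex.I * Dv (ex i) F (t, x)⟫ • stdBasis i)| ≤
      4 * K * G * √(∫ x, ψ x ^ 2 * ‖F (t, x)‖ ^ 2) := by
  have hFs := hF.smooth
  have hD1 : ∀ i, ContDiff ℝ (⊤ : ℕ∞) (Dv (ex i) F) := fun i => Dv_smooth _ hFs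
  have cF : Continuous fun x => F (t, x) := hFs.continuous.comp (by fun_prop)
  have cD1 : ∀ i, Continuous fun x => Dv (ex i) F (t, x) :=
    fun i => (hD1 i).continuous.comp (by fun_prop)
  have hfin : ∀ i, mass (Dv (ex i) F) t ≠ ∞ := fun i =>
    ((Finset.single_le_sum (f := fun i => mass (Dv (ex i) F) t) (fun _ _ => zero_le)
      (Finset.mem_univ i)).trans hGt).trans_lt ENNReal.ofReal_lt_top |>.ne
  set g : Ed d → ℝ := fun x => √(∑ i, ‖Dv (ex i) F (t, x)‖ ^ 2) with hg
  have hg2 : ∀ x, g x ^ 2 = ∑ i, ‖Dv (ex i) F (t, x)‖ ^ 2 := fun x =>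
    Real.sq_sqrt (by positivity)
  have cg : Continuous g := by
    refine Continuous.sqrt (continuous_finsetSum _ fun i _ => ((cD1 i).norm.pow 2))
  have ig2 : Integrable (fun x => g x ^ 2) := by
    simp_rw [hg2]
    exact integrable_finsetSum _ fun i _ => mass_integrable (hD1 i).continuous (hfin i)
  have Ig2 : ∫ x, g x ^ 2 ≤ G ^ 2 := by
    simp_rw [hg2]
    rw [integral_finsetSum _ fun i _ => mass_integrable (hD1 i).continuous (hfin i)]
    simp_rw [fun i => mass_eq (hD1 i).continuous (hfin i)]
    rw [← ENNReal.toReal_sum fun i _ => hfin i]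
    exact ENNReal.toReal_le_of_le_ofReal (by positivity) hGt
  set f : Ed d → ℝ := fun x => |ψ x| * ‖F (t, x)‖ with hf
  have cf : Continuous f := hψ.continuous.abs.mul cF.norm
  have hfc : HasCompactSupport f := HasCompactSupport.intro hc fun x hx => by
    simp [hf, image_eq_zero_of_notMem_tsupport hx]
  have hf2 : ∀ x, f x ^ 2 = ψ x ^ 2 * ‖F (t, x)‖ ^ 2 := fun x => by
    simp [hf, mul_pow]
  have mf : MemLp f (ENNReal.ofReal 2) := cf.memLp_of_hasCompactSupport hfc
  have mg : MemLp g (ENNReal.ofReal 2) := by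
    rw [ENNReal.ofReal_ofNat, memLp_two_iff_integrable_sq cg.aestronglyMeasurable]
    exact ig2
  have hol := integral_mul_le_Lp_mul_Lq_of_nonneg (μ := (volume : Measure (Ed d)))
    Real.HolderConjugate.two_two (f := f) (g := g)
    (Eventually.of_forall fun x => by positivity) (Eventually.of_forall fun x => by positivity) mf mg
  have hol' : ∫ x, f x * g x ≤ √(∫ x, ψ x ^ 2 * ‖F (t, x)‖ ^ 2) * G := by
    refine hol.trans ?_
    simp only [Real.rpow_ofNat, ← Real.sqrt_eq_rpow, hf2]
    refine mul_le_mul_of_nonneg_left ?_ (Real.sqrt_nonneg _)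
    rw [Real.sqrt_le_left hG]
    exact Ig2
  have ptw : ∀ x, ‖ψ x * fderiv ℝ ψ x
        (∑ i, ⟪F (t, x), Complex.I * Dv (ex i) F (t, x)⟫ • stdBasis i)‖ ≤ K * (f x * g x) := by
    intro x
    have h1 : ‖fderiv ℝ ψ x‖ ≤ K := norm_fderiv_le_of_lipschitz ℝ hK
    have h2 : ‖∑ i, ⟪F (t, x), Complex.I * Dv (ex i) F (t, x)⟫ • (stdBasis i : Ed d)‖
        ≤ ‖F (t, x)‖ * g x := by
      rw [norm_sum_stdBasis, Real.sqrt_le_left (by positivity), mul_pow, hg2, Finset.mul_sum]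
      refine Finset.sum_le_sum fun i _ => ?_
      rw [← mul_pow, sq_le_sq, abs_of_nonneg (a := ‖F (t, x)‖ * _) (by positivity)]
      refine (abs_real_inner_le_norm _ _).trans (le_of_eq ?_)
      simp
    rw [norm_mul, Real.norm_eq_abs]
    calc _ ≤ |ψ x| * (K * (‖F (t, x)‖ * g x)) := by
          refine mul_le_mul_of_nonneg_left ?_ (abs_nonneg _)
          refine (ContinuousLinearMap.le_opNorm _ _).trans ?_
          exact mul_le_mul h1 h2 (norm_nonneg _) K.2
      _ = _ := by simp only [hf]; ring
  have ifg : Integrable (fun x => f x * g x) :=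
    (cf.mul cg).integrable_of_hasCompactSupport hfc.mul_right
  have := norm_integral_le_of_norm_le (ifg.const_mul (K : ℝ)) (Eventually.of_forall ptw)
  rw [integral_const_mul, Real.norm_eq_abs] at this
  rw [abs_mul]
  have h4 : |(-4 : ℝ)| = 4 := by norm_num
  rw [h4]
  have h5 := mul_le_mul_of_nonneg_left hol' K.2
  change (K : ℝ) * _ ≤ (K : ℝ) * _ at h5
  nlinarith [this, h5]

lemma flux_estimate {d : ℕ} {F : ℝ × Ed d → ℂ} (hF : Sol F) (ψ : Ed d → ℝ) (K : NNReal)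
    (hψ : ContDiff ℝ (⊤ : ℕ∞) ψ) (hc : HasCompactSupport ψ) (hK : LipschitzWith K ψ) (a b : ℝ)
    (G : ℝ) (hG : 0 ≤ G)
    (hGt : ∀ t ∈ Set.Icc a b, ∑ i, mass (Dv (ex i) F) t ≤ ENNReal.ofReal (G ^ 2))
    (r s : ℝ) (hr : r ∈ Set.Icc a b) (hs : s ∈ Set.Icc a b) :
    √(∫ x, ψ x ^ 2 * ‖F (s, x)‖ ^ 2) ≤ √(∫ x, ψ x ^ 2 * ‖F (r, x)‖ ^ 2) + 2 * K * G * |s - r| := by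
  set m : ℝ → ℝ := fun t => ∫ x, ψ x ^ 2 * ‖F (t, x)‖ ^ 2 with hm
  have hm0 : ∀ t, 0 ≤ m t := fun t => integral_nonneg fun x => by positivity
  have key : ∀ κ : ℝ, 0 < κ → √(m s) ≤ √(m r) + 2 * K * G * |s - r| + √κ := by
    intro κ hκ
    have hd : ∀ t ∈ Set.Icc a b, HasDerivWithinAt (fun t => √(m t + κ)) _ (Set.Icc a b) t :=
      fun t ht => (((flux_deriv hF ψ hψ hc t).add_const κ).sqrt
        (by have := hm0 t; simp only [hm] at this; positivity)).hasDerivWithinAt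
    have hb := (convex_Icc a b).norm_image_sub_le_of_norm_hasDerivWithin_le (C := 2 * K * G)
      hd ?_ hr hs
    · rw [Real.norm_eq_abs, Real.norm_eq_abs] at hb
      have h1 := (abs_le.1 hb).2
      have h2 : √(m s) ≤ √(m s + κ) := Real.sqrt_le_sqrt (by linarith)
      have h3 : √(m r + κ) ≤ √(m r) + √κ := by
        rw [Real.sqrt_le_left (by positivity)]
        nlinarith [Real.sq_sqrt (hm0 r), Real.sq_sqrt hκ.le, Real.sqrt_nonneg (m r),
          Real.sqrt_nonneg κ, mul_nonneg (Real.sqrt_nonneg (m r)) (Real.sqrt_nonneg κ)]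
      linarith
    · intro t ht
      have h1 := flux_bound hF ψ K hψ hc hK t G hG (hGt t ht)
      have h2 : √(m t) ≤ √(m t + κ) := Real.sqrt_le_sqrt (by linarith)
      have h3 : 0 < √(m t + κ) := Real.sqrt_pos.2 (by have := hm0 t; linarith)
      rw [Real.norm_eq_abs, abs_div, abs_of_pos (a := 2 * √(m t + κ)) (by positivity),
        div_le_iff₀ (by positivity)]
      refine h1.trans ?_
      have h4 : (0 : ℝ) ≤ 4 * K * G := by positivity
      have := mul_le_mul_of_nonneg_left h2 h4
      change 4 * K * G * √(m t) ≤ _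
      linarith
  refine le_of_forall_pos_le_add fun κ hκ => ?_
  have := key (κ ^ 2) (by positivity)
  rwa [Real.sqrt_sq hκ.le] at this

lemma mass_limit {d : ℕ} {F : ℝ × Ed d → ℂ} (hF : Continuous F) (s : ℝ) (S : Set (Ed d))
    (hS : MeasurableSet S)
    (ψ : ℕ → Ed d → ℝ) (hψ : ∀ n, Continuous (ψ n)) (hψc : ∀ n, HasCompactSupport (ψ n))
    (hlim : ∀ x ∈ S, Tendsto (fun n => ψ n x) atTop (nhds 1))
    (c : ℕ → ℝ) (c' : ℝ) (hc : Tendsto c atTop (nhds c'))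
    (h : ∀ n, √(∫ x, ψ n x ^ 2 * ‖F (s, x)‖ ^ 2) ≤ c n) :
    ∫⁻ x in S, ‖F (s, x)‖ₑ ^ 2 ≤ ENNReal.ofReal (c' ^ 2) := by
  have cF : Continuous fun x => F (s, x) := hF.comp (by fun_prop)
  have h1 : ∀ x ∈ S, ‖F (s, x)‖ₑ ^ 2 =
      liminf (fun n => ENNReal.ofReal (ψ n x ^ 2 * ‖F (s, x)‖ ^ 2)) atTop := by
    intro x hx
    refine (Tendsto.liminf_eq ?_).symm
    have : ‖F (s, x)‖ₑ ^ 2 = ENNReal.ofReal (1 ^ 2 * ‖F (s, x)‖ ^ 2) := by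
      rw [one_pow, one_mul, ENNReal.ofReal_pow (norm_nonneg _), ofReal_norm]
    rw [this]
    exact ENNReal.tendsto_ofReal (((hlim x hx).pow 2).mul_const _)
  calc ∫⁻ x in S, ‖F (s, x)‖ₑ ^ 2
      = ∫⁻ x in S, liminf (fun n => ENNReal.ofReal (ψ n x ^ 2 * ‖F (s, x)‖ ^ 2)) atTop :=
        setLIntegral_congr_fun hS h1
    _ ≤ liminf (fun n => ∫⁻ x in S, ENNReal.ofReal (ψ n x ^ 2 * ‖F (s, x)‖ ^ 2)) atTop :=
        lintegral_liminf_le fun n => (((hψ n).pow 2).mul (cF.norm.pow 2)).measurable.ennreal_ofReal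
    _ ≤ liminf (fun n => ENNReal.ofReal (c n ^ 2)) atTop := by
        refine liminf_le_liminf (Eventually.of_forall fun n => ?_)
        refine (setLIntegral_le_lintegral _ _).trans ?_
        rw [← ofReal_integral_eq_lintegral_ofReal]
        · refine ENNReal.ofReal_le_ofReal ?_
          exact (Real.sqrt_le_left ((Real.sqrt_nonneg _).trans (h n))).1 (h n)
        · refine Continuous.integrable_of_hasCompactSupport
            (((hψ n).pow 2).mul (cF.norm.pow 2)) ?_
          refine HasCompactSupport.intro (hψc n) fun x hx => ?_
          simp [image_eq_zero_of_notMem_tsupport hx]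
        · exact Eventually.of_forall fun x => by positivity
    _ = ENNReal.ofReal (c' ^ 2) :=
        (ENNReal.tendsto_ofReal (hc.pow 2)).liminf_eq

lemma weighted_le {d : ℕ} {F : ℝ × Ed d → ℂ} (hF : Continuous F) (r : ℝ) (hr : mass F r ≠ ∞)
    (ψ : Ed d → ℝ) (hψ : Continuous ψ) (C : ℝ) (hC0 : 0 ≤ C)
    (hC : ∀ x, F (r, x) ≠ 0 → |ψ x| ≤ C) :
    √(∫ x, ψ x ^ 2 * ‖F (r, x)‖ ^ 2) ≤ C * √(mass F r).toReal := by
  rw [Real.sqrt_le_left (by positivity), mul_pow, Real.sq_sqrt ENNReal.toReal_nonneg,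
    ← mass_eq hF hr, ← integral_const_mul]
  refine integral_mono_of_nonneg (Eventually.of_forall fun x => by positivity)
    ((mass_integrable hF hr).const_mul _) (Eventually.of_forall fun x => ?_)
  by_cases hx : F (r, x) = 0
  · simp [hx]
  · refine mul_le_mul_of_nonneg_right ?_ (by positivity)
    rw [← sq_abs]
    exact pow_le_pow_left₀ (abs_nonneg _) (hC x hx) 2

lemma cons_aux {d : ℕ} {F : ℝ × Ed d → ℂ} (hF : Sol F) (a b : ℝ)
    (G : ℝ) (hG : 0 ≤ G)
    (hGt : ∀ t ∈ Set.Icc a b, ∑ i, mass (Dv (ex i) F) t ≤ ENNReal.ofReal (G ^ 2))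
    (r s : ℝ) (hr : r ∈ Set.Icc a b) (hs : s ∈ Set.Icc a b) : mass F s ≤ mass F r := by
  by_cases hfin : mass F r = ∞
  · simp [hfin]
  have hex : ∀ n : ℕ, ∃ ψ : Ed d → ℝ, ContDiff ℝ (⊤ : ℕ∞) ψ ∧ HasCompactSupport ψ ∧
      LipschitzWith (1 / (n + 1 : NNReal)) ψ ∧ ∀ x, |ψ x - max 0 (min 1 (2 - ‖x‖ / (n + 1)))| ≤
        (1 / (n + 1 : NNReal) : NNReal) * 1 := by
    intro n
    refine exists_weight (fun x => max 0 (min 1 (2 - ‖x‖ / (n + 1)))) _ ?_ ?_ 1 one_pos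
    · refine LipschitzWith.const_max (LipschitzWith.const_min ?_ _) _
      refine LipschitzWith.of_dist_le_mul fun x y => ?_
      rw [Real.dist_eq]
      have h1 : 2 - ‖x‖ / (n + 1 : ℝ) - (2 - ‖y‖ / (n + 1 : ℝ)) = (‖y‖ - ‖x‖) / (n + 1 : ℝ) := by
        ring
      rw [h1, abs_div, abs_of_pos (a := (n + 1 : ℝ)) (by positivity)]
      have h2 := abs_norm_sub_norm_le y x
      rw [dist_comm, dist_eq_norm]
      push_cast
      rw [one_div, div_eq_inv_mul]
      gcongr
    · refine HasCompactSupport.intro (isCompact_closedBall (0 : Ed d) (2 * (n + 1))) fun x hx => ?_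
      rw [mem_closedBall_zero_iff, not_le] at hx
      have : 2 < ‖x‖ / (n + 1 : ℝ) := by rw [lt_div_iff₀ (by positivity)]; linarith
      exact max_eq_left ((min_le_right _ _).trans (by linarith))
  choose ψ h1 h2 h3 h4 using hex
  have hn : Tendsto (fun n : ℕ => 1 / ((n : ℝ) + 1)) atTop (nhds 0) :=
    tendsto_one_div_add_atTop_nhds_zero_nat
  have h4' : ∀ n x, |ψ n x - max 0 (min 1 (2 - ‖x‖ / (n + 1)))| ≤ 1 / ((n : ℝ) + 1) := by
    intro n x
    simpa using h4 n x
  have := mass_limit hF.smooth.continuous s Set.univ MeasurableSet.univ ψ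
    (fun n => (h1 n).continuous) h2 ?_
    (fun n => (1 + 1 / ((n : ℝ) + 1)) * √(mass F r).toReal + 2 * (1 / ((n : ℝ) + 1)) * G * |s - r|)
    (√(mass F r).toReal) ?_ ?_
  · rw [Real.sq_sqrt ENNReal.toReal_nonneg, ENNReal.ofReal_toReal hfin] at this
    simpa [mass] using this
  · intro x _
    have hz : Tendsto (fun n => ψ n x - 1) atTop (nhds 0) := by
      refine squeeze_zero_norm' ?_ hn
      filter_upwards [eventually_ge_atTop ⌈‖x‖⌉₊] with n hnx
      have hx1 : ‖x‖ / ((n : ℝ) + 1) ≤ 1 := by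
        rw [div_le_one (by positivity)]
        have := Nat.ceil_le.1 hnx
        linarith
      have := h4' n x
      rwa [min_eq_left (by linarith), max_eq_right zero_le_one] at this
    simpa using hz.add_const 1
  · have := ((hn.const_add 1).mul_const √(mass F r).toReal).add
      (((hn.const_mul 2).mul_const G).mul_const |s - r|)
    simpa using this
  · intro n
    have e1 := flux_estimate hF (ψ n) _ (h1 n) (h2 n) (h3 n) a b G hG hGt r s hr hs
    have e2 := weighted_le hF.smooth.continuous r hfin (ψ n) (h1 n).continuous
      (1 + 1 / ((n : ℝ) + 1)) (by positivity) (by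
        intro x _
        have e3 := abs_le.1 (h4' n x)
        have e4 : max 0 (min 1 (2 - ‖x‖ / ((n : ℝ) + 1))) ≤ 1 := by simp
        have e5 : 0 ≤ max 0 (min 1 (2 - ‖x‖ / ((n : ℝ) + 1))) := by simp
        rw [abs_le]
        constructor <;> linarith [e3.1, e3.2])
    push_cast at e1
    linarith

def cv {d : ℕ} (η : Ed d → ℝ) (F : ℝ × Ed d → ℂ) (p : ℝ × Ed d) : ℂ :=
  ∫ y, η y • F (p.1, p.2 - y)

lemma cv_integrand_smooth {d : ℕ} {η : Ed d → ℝ} {F : ℝ × Ed d → ℂ}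
    (hη : ContDiff ℝ (⊤ : ℕ∞) η) (hF : ContDiff ℝ (⊤ : ℕ∞) F) :
    ContDiff ℝ (⊤ : ℕ∞) (fun q : (ℝ × Ed d) × Ed d => η q.2 • F (q.1.1, q.1.2 - q.2)) :=
  (hη.comp contDiff_snd).smul (hF.comp (by fun_prop))

open scoped Convolution in
lemma cv_smooth {d : ℕ} {η : Ed d → ℝ} {F : ℝ × Ed d → ℂ}
    (hη : ContDiff ℝ (⊤ : ℕ∞) η) (hc : HasCompactSupport η) (hF : ContDiff ℝ (⊤ : ℕ∞) F) :
    ContDiff ℝ (⊤ : ℕ∞) (cv η F) := by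
  have h := contDiffOn_convolution_right_with_param (𝕜 := ℝ) (μ := (volume : Measure (Ed d)))
    (f := fun _ : Ed d => (1 : ℝ)) (n := ⊤) (ContinuousLinearMap.lsmul ℝ ℝ)
    (g := fun (p : ℝ × Ed d) (y : Ed d) => η y • F (p.1, p.2 - y)) (s := Set.univ)
    (k := tsupport η) isOpen_univ hc
    (by intro p y _ hy; simp [image_eq_zero_of_notMem_tsupport hy])
    (continuous_const.locallyIntegrable)
    ((cv_integrand_smooth hη hF).contDiffOn)
  rw [Set.univ_prod_univ, contDiffOn_univ] at h
  have h2 := h.comp (contDiff_id.prodMk (contDiff_const (c := (0 : Ed d))) :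
    ContDiff ℝ (⊤ : ℕ∞) fun p : ℝ × Ed d => (p, (0 : Ed d)))
  convert h2 using 1
  ext p
  simp only [Function.comp, convolution_def, ContinuousLinearMap.lsmul_apply, one_smul, zero_sub,
    cv]
  rw [← integral_neg_eq_self]
  rfl

lemma Dv_cv {d : ℕ} {η : Ed d → ℝ} {F : ℝ × Ed d → ℂ}
    (hη : ContDiff ℝ (⊤ : ℕ∞) η) (hc : HasCompactSupport η) (hF : ContDiff ℝ (⊤ : ℕ∞) F)
    (v : ℝ × Ed d) : Dv v (cv η F) = cv η (Dv v F) := by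
  ext p
  have := (param_integral (P := ℝ × Ed d) (d := d)
    (fun q => η q.2 • F (q.1.1, q.1.2 - q.2))
    ((cv_integrand_smooth hη hF).of_le (by norm_cast)) (tsupport η) hc
    (by intro p y hy; simp [image_eq_zero_of_notMem_tsupport hy]) p).2 v
  unfold Dv cv
  rw [this]
  congr 1
  ext y
  have h1 : HasFDerivAt (fun q : (ℝ × Ed d) × Ed d => η q.2)
      ((fderiv ℝ η y).comp (ContinuousLinearMap.snd ℝ (ℝ × Ed d) (Ed d))) (p, y) :=
    HasFDerivAt.comp (p, y) (g := η) (f := Prod.snd)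
      ((hη.differentiable (by simp) y).hasFDerivAt) hasFDerivAt_snd
  let A : ((ℝ × Ed d) × Ed d) →L[ℝ] (ℝ × Ed d) :=
    ContinuousLinearMap.fst ℝ (ℝ × Ed d) (Ed d) -
      (ContinuousLinearMap.inr ℝ ℝ (Ed d)).comp (ContinuousLinearMap.snd ℝ (ℝ × Ed d) (Ed d))
  have hA : ∀ q : (ℝ × Ed d) × Ed d, A q = (q.1.1, q.1.2 - q.2) := by
    intro q
    ext <;> simp [A]
  have h2 : HasFDerivAt (fun q : (ℝ × Ed d) × Ed d => F (q.1.1, q.1.2 - q.2))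
      ((fderiv ℝ F (p.1, p.2 - y)).comp A) (p, y) := by
    have h3 : HasFDerivAt F (fderiv ℝ F (A (p, y))) (A (p, y)) :=
      (hF.differentiable (by simp) _).hasFDerivAt
    have h4 := h3.comp (p, y) A.hasFDerivAt
    rw [hA] at h4
    refine h4.congr_of_eventuallyEq (Eventually.of_forall fun q => ?_)
    simp only [Function.comp, hA]
  have h5 : HasFDerivAt (fun q : (ℝ × Ed d) × Ed d => η q.2 • F (q.1.1, q.1.2 - q.2)) _ (p, y) :=
    h1.smul h2
  rw [h5.fderiv]
  simp [hA]

lemma cv_integrable {d : ℕ} {η : Ed d → ℝ} {F : ℝ × Ed d → ℂ}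
    (hη : Continuous η) (hc : HasCompactSupport η) (hF : Continuous F) (p : ℝ × Ed d) :
    Integrable (fun y => η y • F (p.1, p.2 - y)) := by
  refine Continuous.integrable_of_hasCompactSupport ?_ ?_
  · exact hη.smul (hF.comp (by fun_prop))
  · exact hc.smul_right

lemma cv_sol {d : ℕ} {η : Ed d → ℝ} {F : ℝ × Ed d → ℂ}
    (hη : ContDiff ℝ (⊤ : ℕ∞) η) (hc : HasCompactSupport η) (hF : Sol F) : Sol (cv η F) := by
  refine ⟨cv_smooth hη hc hF.smooth, fun p => ?_⟩
  rw [Dv_cv hη hc hF.smooth]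
  have : ∀ i, Dv (ex i) (Dv (ex i) (cv η F)) = cv η (Dv (ex i) (Dv (ex i) F)) := by
    intro i
    rw [Dv_cv hη hc hF.smooth, Dv_cv hη hc (Dv_smooth _ hF.smooth)]
  simp_rw [this]
  unfold cv
  rw [← integral_finsetSum _ fun i _ => cv_integrable hη.continuous hc
    (Dv_smooth _ (Dv_smooth _ hF.smooth)).continuous p, ← integral_const_mul]
  congr 1
  ext y
  rw [hF.eq, ← Finset.smul_sum, mul_smul_comm]

lemma Dv_cv' {d : ℕ} {η : Ed d → ℝ} {F : ℝ × Ed d → ℂ}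
    (hη : ContDiff ℝ (⊤ : ℕ∞) η) (hc : HasCompactSupport η) (hF : ContDiff ℝ (⊤ : ℕ∞) F)
    (i : Fin d) : Dv (ex i) (cv η F) = cv (fun y => fderiv ℝ η y (stdBasis i)) F := by
  rw [Dv_cv hη hc hF]
  ext p
  have cη' : Continuous fun y => fderiv ℝ η y (stdBasis i) :=
    (hη.continuous_fderiv (by simp)).clm_apply continuous_const
  have hc' : HasCompactSupport fun y => fderiv ℝ η y (stdBasis i) := hc.fderiv_apply (𝕜 := ℝ) _
  have h0 := integral_fderiv_zero (𝕜 := ℂ) (fun y => η y • F (p.1, p.2 - y))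
    (((cv_integrand_smooth hη hF).comp (contDiff_const.prodMk contDiff_id :
      ContDiff ℝ (⊤ : ℕ∞) fun y : Ed d => (p, y))).of_le (by norm_cast)) hc.smul_right (stdBasis i)
  have e : ∀ y, fderiv ℝ (fun y => η y • F (p.1, p.2 - y)) y (stdBasis i) =
      fderiv ℝ η y (stdBasis i) • F (p.1, p.2 - y) - η y • Dv (ex i) F (p.1, p.2 - y) := by
    intro y
    have h1 : HasFDerivAt η (fderiv ℝ η y) y := (hη.differentiable (by simp) y).hasFDerivAt
    have h2 := (slice_hasFDerivAt hF p.1 (p.2 - y)).comp y ((hasFDerivAt_id y).const_sub p.2)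
    have h3 : HasFDerivAt (fun y => η y • F (p.1, p.2 - y)) _ y := h1.smul h2
    rw [h3.fderiv]
    simp [Dv, ex]
    ring
  simp_rw [e] at h0
  rw [integral_sub (cv_integrable cη' hc' hF.continuous p)
    (cv_integrable hη.continuous hc (Dv_smooth _ hF).continuous p), sub_eq_zero] at h0
  exact h0.symm

lemma young {d : ℕ} {η : Ed d → ℝ} {F : ℝ × Ed d → ℂ} (hη : Continuous η) (hF : Continuous F)
    (t : ℝ) : mass (cv η F) t ≤ (∫⁻ y, ‖η y‖ₑ) ^ 2 * mass F t := by
  set C := ∫⁻ y, ‖η y‖ₑ with hC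
  have mη : Measurable fun y => ‖η y‖ₑ := hη.measurable.enorm
  have mF : ∀ x, Measurable fun y => ‖F (t, x - y)‖ₑ := fun x =>
    (hF.comp (by fun_prop : Continuous fun y => (t, x - y))).measurable.enorm
  have h1 : ∀ x, ‖cv η F (t, x)‖ₑ ^ 2 ≤ C * ∫⁻ y, ‖η y‖ₑ * ‖F (t, x - y)‖ₑ ^ 2 := by
    intro x
    set ν := (volume : Measure (Ed d)).withDensity fun y => ‖η y‖ₑ with hν
    have hw : ∀ f : Ed d → ℝ≥0∞, Measurable f → ∫⁻ y, f y ∂ν = ∫⁻ y, ‖η y‖ₑ * f y := by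
      intro f hf
      rw [hν, lintegral_withDensity_eq_lintegral_mul _ mη hf]
      rfl
    have e1 : ‖cv η F (t, x)‖ₑ ≤ ∫⁻ y, ‖F (t, x - y)‖ₑ ∂ν := by
      rw [hw _ (mF x)]
      refine (enorm_integral_le_lintegral_enorm _).trans (le_of_eq ?_)
      simp_rw [enorm_smul]
    have e2 := ENNReal.lintegral_mul_le_Lp_mul_Lq ν Real.HolderConjugate.two_two
      (f := fun _ => 1) (g := fun y => ‖F (t, x - y)‖ₑ) aemeasurable_const (mF x).aemeasurable
    have e3 : ∫⁻ y, ‖F (t, x - y)‖ₑ ∂ν ≤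
        C ^ (1 / 2 : ℝ) * (∫⁻ y, ‖η y‖ₑ * ‖F (t, x - y)‖ₑ ^ 2) ^ (1 / 2 : ℝ) := by
      rw [← hw _ ((mF x).pow_const 2)]
      have : C = ν Set.univ := by
        rw [hν, withDensity_apply _ MeasurableSet.univ, Measure.restrict_univ]
      rw [this]
      simpa using e2
    refine (pow_le_pow_left₀ zero_le (e1.trans e3) 2).trans (le_of_eq ?_)
    rw [mul_pow, ← ENNReal.rpow_natCast, ← ENNReal.rpow_natCast, ← ENNReal.rpow_mul,
      ← ENNReal.rpow_mul]
    norm_num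
  have hj : Measurable fun q : Ed d × Ed d => ‖η q.2‖ₑ * ‖F (t, q.1 - q.2)‖ₑ ^ 2 :=
    (mη.comp measurable_snd).mul
      ((hF.comp (by fun_prop : Continuous fun q : Ed d × Ed d => (t, q.1 - q.2))).measurable.enorm.pow_const 2)
  calc mass (cv η F) t ≤ ∫⁻ x, C * ∫⁻ y, ‖η y‖ₑ * ‖F (t, x - y)‖ₑ ^ 2 := lintegral_mono h1
    _ = C * ∫⁻ x, ∫⁻ y, ‖η y‖ₑ * ‖F (t, x - y)‖ₑ ^ 2 :=
        lintegral_const_mul _ hj.lintegral_prod_right'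
    _ = C * ∫⁻ y, ∫⁻ x, ‖η y‖ₑ * ‖F (t, x - y)‖ₑ ^ 2 := by
        rw [lintegral_lintegral_swap hj.aemeasurable]
    _ = C * ∫⁻ y, ‖η y‖ₑ * mass F t := by
        congr 1
        refine lintegral_congr fun y => ?_
        have mF' : Measurable fun x => ‖F (t, x - y)‖ₑ ^ 2 := (hF.comp
          (by fun_prop : Continuous fun x => (t, x - y))).measurable.enorm.pow_const 2
        rw [lintegral_const_mul _ mF']
        congr 1
        exact lintegral_sub_right_eq_self (fun x => ‖F (t, x)‖ₑ ^ 2) y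
    _ = _ := by rw [lintegral_mul_const _ mη]; ring

lemma cons_bounded {d : ℕ} {F : ℝ × Ed d → ℂ} (hF : Sol F) (a b : ℝ) (N : ℝ≥0∞) (hN : N ≠ ∞)
    (hb : ∀ t ∈ Set.Icc a b, mass F t ≤ N)
    (r s : ℝ) (hr : r ∈ Set.Icc a b) (hs : s ∈ Set.Icc a b) : mass F s ≤ mass F r := by
  let φ : ℕ → ContDiffBump (0 : Ed d) := fun n =>
    ⟨1 / (n + 1) / 2, 1 / (n + 1), by positivity, half_lt_self (by positivity)⟩
  set η : ℕ → Ed d → ℝ := fun n => (φ n).normed volume with hη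
  have ηs : ∀ n, ContDiff ℝ (⊤ : ℕ∞) (η n) := fun n => (φ n).contDiff_normed
  have ηc : ∀ n, HasCompactSupport (η n) := fun n => (φ n).hasCompactSupport_normed
  have cF := hF.smooth.continuous
  have h1 : ∀ n, mass (cv (η n) F) s ≤ mass F r := by
    intro n
    have hD : ∀ i, Continuous fun y => fderiv ℝ (η n) y (stdBasis i) := fun i =>
      ((ηs n).continuous_fderiv (by simp)).clm_apply continuous_const
    have hfin : ∀ i, ∫⁻ y, ‖fderiv ℝ (η n) y (stdBasis i)‖ₑ ≠ ∞ := fun i =>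
      ((hD i).integrable_of_hasCompactSupport (μ := volume) ((ηc n).fderiv_apply (𝕜 := ℝ) _)).2.ne
    set B : ℝ≥0∞ := ∑ i, (∫⁻ y, ‖fderiv ℝ (η n) y (stdBasis i)‖ₑ) ^ 2 * N with hB
    have hBf : B ≠ ∞ := by
      rw [hB]
      refine ENNReal.sum_ne_top.2 fun i _ => ENNReal.mul_ne_top (ENNReal.pow_ne_top (hfin i)) hN
    have h2 := cons_aux (cv_sol (ηs n) (ηc n) hF) a b (√B.toReal) (Real.sqrt_nonneg _) (by
      intro t ht
      rw [Real.sq_sqrt ENNReal.toReal_nonneg, ENNReal.ofReal_toReal hBf]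
      refine Finset.sum_le_sum fun i _ => ?_
      rw [Dv_cv' (ηs n) (ηc n) hF.smooth]
      refine (young (hD i) cF t).trans ?_
      gcongr
      exact hb t ht) r s hr hs
    refine h2.trans ((young (ηs n).continuous cF r).trans (le_of_eq ?_))
    have : ∫⁻ y, ‖η n y‖ₑ = 1 := by
      have e1 : ∀ y, ‖η n y‖ₑ = ENNReal.ofReal (η n y) := fun y =>
        Real.enorm_of_nonneg ((φ n).nonneg_normed y)
      simp_rw [e1]
      rw [← ofReal_integral_eq_lintegral_ofReal (φ n).integrable_normed
        (Eventually.of_forall fun y => (φ n).nonneg_normed y), (φ n).integral_normed,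
        ENNReal.ofReal_one]
    rw [this]; simp
  have h2 : ∀ x, Tendsto (fun n => cv (η n) F (s, x)) atTop (nhds (F (s, x))) := by
    intro x
    have := ContDiffBump.convolution_tendsto_right_of_continuous (φ := φ) (l := atTop)
      (μ := (volume : Measure (Ed d))) (g := fun x => F (s, x))
      tendsto_one_div_add_atTop_nhds_zero_nat (cF.comp (by fun_prop)) x
    exact this
  calc mass F s = ∫⁻ x, liminf (fun n => ‖cv (η n) F (s, x)‖ₑ ^ 2) atTop := by
        refine lintegral_congr fun x => ?_
        refine (Tendsto.liminf_eq ?_).symm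
        exact ((ENNReal.continuous_pow 2).tendsto _).comp ((h2 x).enorm)
    _ ≤ liminf (fun n => mass (cv (η n) F) s) atTop := by
        refine lintegral_liminf_le fun n => ?_
        exact ((cv_smooth (ηs n) (ηc n) hF.smooth).continuous.comp
          (by fun_prop : Continuous fun x : Ed d => (s, x))).measurable.enorm.pow_const 2
    _ ≤ liminf (fun _ : ℕ => mass F r) atTop :=
        liminf_le_liminf (Eventually.of_forall h1)
    _ = mass F r := by simp

lemma mass_conserved {d : ℕ} {F : ℝ × Ed d → ℂ} (hF : Sol F) (hfin : ∀ t, mass F t ≠ ∞) :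
    ∀ a b, mass F a = mass F b := by
  refine baire_aux _ hfin ?_ ?_
  · intro n
    refine IsSeqClosed.isClosed ?_
    intro τ t hτ hlim
    have cF := hF.smooth.continuous
    change mass F t ≤ n
    calc mass F t = ∫⁻ x, liminf (fun k => ‖F (τ k, x)‖ₑ ^ 2) atTop := by
          refine lintegral_congr fun x => ?_
          refine (Tendsto.liminf_eq ?_).symm
          refine ((ENNReal.continuous_pow 2).tendsto _).comp (Tendsto.enorm ?_)
          exact ((cF.comp (by fun_prop : Continuous fun s : ℝ => (s, x))).tendsto t).comp hlim
      _ ≤ liminf (fun k => mass F (τ k)) atTop := by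
          refine lintegral_liminf_le fun k => ?_
          exact (cF.comp
            (by fun_prop : Continuous fun x : Ed d => (τ k, x))).measurable.enorm.pow_const 2
      _ ≤ liminf (fun _ : ℕ => (n : ℝ≥0∞)) atTop :=
          liminf_le_liminf (Eventually.of_forall hτ)
      _ = n := by simp
  · intro a b hab N hN hb
    exact le_antisymm
      (cons_bounded hF a b N hN hb b a ⟨hab, le_rfl⟩ ⟨le_rfl, hab⟩)
      (cons_bounded hF a b N hN hb a b ⟨le_rfl, hab⟩ ⟨hab, le_rfl⟩)

lemma Dv_comm {d : ℕ} {F : ℝ × Ed d → ℂ} (hF : ContDiff ℝ (⊤ : ℕ∞) F) (v w : ℝ × Ed d) :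
    Dv v (Dv w F) = Dv w (Dv v F) := by
  have hd : Differentiable ℝ (fderiv ℝ F) :=
    (hF.fderiv_right (m := 1) (by norm_cast)).differentiable (by simp)
  have e : ∀ v w p, Dv v (Dv w F) p = fderiv ℝ (fderiv ℝ F) p v w := by
    intro v w p
    unfold Dv
    rw [fderiv_clm_apply (hd p) (differentiableAt_const _)]
    simp
  ext p
  rw [e, e]
  exact (hF.contDiffAt.isSymmSndFDerivAt (by simp; norm_cast)).eq v w

lemma sol_Dv {d : ℕ} {F : ℝ × Ed d → ℂ} (hF : Sol F) (i : Fin d) : Sol (Dv (ex i) F) := by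
  refine ⟨Dv_smooth _ hF.smooth, fun p => ?_⟩
  have hs := hF.smooth
  rw [Dv_comm hs]
  have e1 : Dv (1, 0) F = fun p => Complex.I * ∑ j, Dv (ex j) (Dv (ex j) F) p := funext hF.eq
  have e2 : ∀ j, Dv (ex j) (Dv (ex j) (Dv (ex i) F)) = Dv (ex i) (Dv (ex j) (Dv (ex j) F)) := by
    intro j
    rw [Dv_comm hs (ex j) (ex i), Dv_comm (Dv_smooth _ hs) (ex j) (ex i)]
  simp_rw [e2]
  rw [e1]
  have hdj : ∀ j, HasFDerivAt (Dv (ex j) (Dv (ex j) F))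
      (fderiv ℝ (Dv (ex j) (Dv (ex j) F)) p) p := fun j =>
    ((Dv_smooth _ (Dv_smooth _ hs)).differentiable (by simp) p).hasFDerivAt
  have h := (HasFDerivAt.fun_sum fun j (_ : j ∈ Finset.univ) => hdj j).const_mul Complex.I
  change fderiv ℝ _ p (ex i) = _
  rw [h.fderiv]
  simp [Dv]

lemma pd_eq {d : ℕ} {u : ℝ → SchwartzMap (Ed d) ℂ}
    (hs : ContDiff ℝ (⊤ : ℕ∞) (fun p : ℝ × Ed d => u p.1 p.2)) (i : Fin d) (t : ℝ) :
    pd (u t) i = fun x => Dv (ex i) (fun p : ℝ × Ed d => u p.1 p.2) (t, x) := by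
  ext x
  have h := slice_hasFDerivAt hs t x
  unfold pd
  have h' : HasFDerivAt (u t) _ x := h
  rw [h'.fderiv]
  rfl

lemma sol_of {d : ℕ} (u : ℝ → SchwartzMap (Ed d) ℂ) (hu : IsLinSchrodSol d u) :
    Sol (fun p : ℝ × Ed d => u p.1 p.2) := by
  obtain ⟨hs, he⟩ := hu
  refine ⟨hs, ?_⟩
  rintro ⟨t, x⟩
  have h1 : HasFDerivAt (fun p : ℝ × Ed d => u p.1 p.2)
      (fderiv ℝ (fun p : ℝ × Ed d => u p.1 p.2) (t, x)) ((fun s : ℝ => (s, x)) t) :=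
    (hs.differentiable (by simp) (t, x)).hasFDerivAt
  have h2 : HasFDerivAt (fun s => u s x) ((fderiv ℝ (fun p : ℝ × Ed d => u p.1 p.2) (t, x)).comp
      (ContinuousLinearMap.inl ℝ ℝ (Ed d))) t :=
    HasFDerivAt.comp (g := fun p : ℝ × Ed d => u p.1 p.2) (f := fun s : ℝ => (s, x)) t h1
      (hasFDerivAt_prodMk_left t x)
  have h3 : deriv (fun s => u s x) t = Dv (1, 0) (fun p : ℝ × Ed d => u p.1 p.2) (t, x) := by
    rw [← fderiv_apply_one_eq_deriv, h2.fderiv]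
    rfl
  rw [← h3, he]
  congr 1
  unfold lap
  refine Finset.sum_congr rfl fun i _ => ?_
  rw [pd_eq hs i t]
  unfold pd
  rw [(slice_hasFDerivAt (Dv_smooth (ex i) hs) t x).fderiv]
  rfl

lemma mass_ne_top_of_memLp {d : ℕ} {F : ℝ × Ed d → ℂ} {t : ℝ}
    (h : MemLp (fun x => F (t, x)) 2 volume) : mass F t ≠ ∞ := by
  have h1 := (memLp_two_iff_integrable_sq_norm h.1).1 h
  have h2 := h1.2
  rw [hasFiniteIntegral_iff_enorm] at h2
  refine ne_of_lt (lt_of_le_of_lt (le_of_eq ?_) h2)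
  simp [mass]

/-- Mass confinement in a light cone: if `supp u(0) ⊆ A`, `ε > 0` and
`γ = 2‖∇u(0)‖₂/ε`, then for every `t > 0` the mass of `u(t)` outside
`{x : dist(x,A) < γ t}` is at most `ε`. -/
theorem mass_confinement_light_cone_linear
    {d : ℕ} (hd : 1 ≤ d) (u : ℝ → SchwartzMap (Ed d) ℂ)
    (hu : IsLinSchrodSol d u)
    (A : Set (Ed d)) (hA : A.Nonempty)
    (hsupp : Function.support (⇑(u 0)) ⊆ A)
    (ε : ℝ) (hε : 0 < ε)
    (γ : ℝ) (hγ : γ = 2 * gradL2 (fun x => u 0 x) / ε)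
    (t : ℝ) (ht : 0 < t) :
    L2On ({x : Ed d | Metric.infDist x A < γ * t}ᶜ) (fun x => u t x) ≤ ε := by
  classical
  obtain ⟨hsm, heq⟩ := hu
  set F : ℝ × Ed d → ℂ := fun p => u p.1 p.2 with hFdef
  have hF : Sol F := sol_of u ⟨hsm, heq⟩
  have cF : Continuous F := hF.smooth.continuous
  have hD1 : ∀ i, ContDiff ℝ (⊤ : ℕ∞) (Dv (ex i) F) := fun i => Dv_smooth _ hF.smooth
  have hfin : ∀ s, mass F s ≠ ∞ := fun s => mass_ne_top_of_memLp ((u s).memLp 2)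
  have hfinD : ∀ i s, mass (Dv (ex i) F) s ≠ ∞ := by
    intro i s
    refine mass_ne_top_of_memLp (F := Dv (ex i) F) ?_
    have h1 := (SchwartzMap.fderivCLM ℝ (Ed d) ℂ (u s)).memLp 2 (volume : Measure (Ed d))
    have h2 : MemLp (fun x => (ContinuousLinearMap.apply ℝ ℂ (stdBasis i : Ed d))
        (SchwartzMap.fderivCLM ℝ (Ed d) ℂ (u s) x)) 2 volume :=
      ContinuousLinearMap.comp_memLp' _ h1
    refine h2.ae_eq (Eventually.of_forall fun x => ?_)
    change fderiv ℝ (u s) x (stdBasis i) = _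
    rw [← pd_eq hsm i s]
    rfl
  have hMD : ∀ i s, mass (Dv (ex i) F) s = mass (Dv (ex i) F) 0 := fun i s =>
    mass_conserved (sol_Dv hF i) (hfinD i) s 0
  have hM : ∀ s, mass F s = mass F 0 := fun s => mass_conserved hF hfin s 0
  set G : ℝ := gradL2 (fun x => u 0 x) with hGdef
  have hG0 : 0 ≤ G := Real.rpow_nonneg (integral_nonneg fun x => by
    unfold gradNormSq; positivity) _
  have hG2 : ∑ i, mass (Dv (ex i) F) 0 = ENNReal.ofReal (G ^ 2) := by
    have e1 : G = √(∫ x, gradNormSq (u 0) x) := by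
      rw [Real.sqrt_eq_rpow]; rfl
    have e2 : ∀ x, gradNormSq (u 0) x = ∑ i, ‖Dv (ex i) F (0, x)‖ ^ 2 := by
      intro x
      unfold gradNormSq
      refine Finset.sum_congr rfl fun i _ => ?_
      rw [pd_eq hsm i 0]
    rw [e1, Real.sq_sqrt (integral_nonneg fun x => by unfold gradNormSq; positivity)]
    simp_rw [e2]
    rw [integral_finsetSum _ fun i _ => mass_integrable (hD1 i).continuous (hfinD i 0)]
    simp_rw [fun i => mass_eq (hD1 i).continuous (hfinD i 0)]
    rw [← ENNReal.toReal_sum fun i _ => hfinD i 0,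
      ENNReal.ofReal_toReal (ENNReal.sum_ne_top.2 fun i _ => hfinD i 0)]
  have hGt : ∀ s, ∑ i, mass (Dv (ex i) F) s ≤ ENNReal.ofReal (G ^ 2) := by
    intro s
    rw [← hG2]
    exact Finset.sum_le_sum fun i _ => (hMD i s).le
  set S : Set (Ed d) := {x : Ed d | Metric.infDist x A < γ * t}ᶜ with hS
  have hSm : MeasurableSet S :=
    (isOpen_lt (Metric.continuous_infDist_pt A) continuous_const).measurableSet.compl
  have key : ∫⁻ x in S, ‖F (t, x)‖ₑ ^ 2 ≤ ENNReal.ofReal (ε ^ 2) := by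
    rcases hG0.eq_or_lt with hz | hpos
    · -- gradient zero: the solution vanishes
      have hu0 : mass F 0 = 0 := by
        rw [← hz] at hG2
        simp only [ne_eq, OfNat.ofNat_ne_zero, not_false_eq_true, zero_pow, ENNReal.ofReal_zero,
          Finset.sum_eq_zero_iff, Finset.mem_univ, true_implies] at hG2
        have hDz : ∀ i x, Dv (ex i) F (0, x) = 0 := by
          intro i
          have c1 : Continuous fun x => Dv (ex i) F (0, x) :=
            (hD1 i).continuous.comp (by fun_prop)
          have h1 := hG2 i
          unfold mass at h1
          rw [lintegral_eq_zero_iff (c1.measurable.enorm.pow_const 2)] at h1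
          have h2 : (fun x => Dv (ex i) F (0, x)) =ᵐ[volume] fun _ => 0 := by
            filter_upwards [h1] with x hx
            simpa using hx
          have h3 := (c1.ae_eq_iff_eq volume continuous_const).1 h2
          exact fun x => congrFun h3 x
        have hfd : ∀ x, fderiv ℝ (u 0) x = 0 := by
          intro x
          refine ContinuousLinearMap.coe_injective ?_
          refine (EuclideanSpace.basisFun (Fin d) ℝ).toBasis.ext fun i => ?_
          have h1 : pd (u 0) i x = 0 := by
            rw [pd_eq hsm i 0]
            exact hDz i x
          simpa [pd, stdBasis] using h1
        have hconst := is_const_of_fderiv_eq_zero (𝕜 := ℝ) (u 0).differentiable hfd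
        have : Nonempty (Fin d) := ⟨⟨0, hd⟩⟩
        have hnt : Nontrivial (Ed d) := inferInstance
        have hnc : NoncompactSpace (Ed d) := NormedSpace.noncompactSpace ℝ (Ed d)
        have htd : Tendsto (u 0) (cocompact (Ed d)) (nhds 0) := zero_at_infty (u 0)
        have hall : ∀ x, u 0 x = 0 := by
          intro x
          have h2 : Tendsto (u 0) (cocompact (Ed d)) (nhds (u 0 x)) := by
            have : ⇑(u 0) = fun _ => u 0 x := funext fun y => hconst y x
            rw [this]
            exact tendsto_const_nhds
          exact tendsto_nhds_unique h2 htd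
        simp [mass, hFdef, hall]
      have h1 : ∫⁻ x in S, ‖F (t, x)‖ₑ ^ 2 ≤ mass F t := setLIntegral_le_lintegral _ _
      rw [hM, hu0] at h1
      exact h1.trans zero_le
    · have hγ0 : 0 < γ := by rw [hγ]; positivity
      set ρ : ℝ := γ * t with hρ
      have hρ0 : 0 < ρ := by positivity
      set K : NNReal := Real.toNNReal (1 / ρ) with hK
      have hKr : (K : ℝ) = 1 / ρ := Real.coe_toNNReal _ (by positivity)
      set g : ℕ → Ed d → ℝ := fun n x =>
        min (min (Metric.infDist x A / ρ) 1) (max 0 ((n - ‖x‖) / ρ)) with hg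
      have hgL : ∀ n, LipschitzWith K (g n) := by
        intro n
        have l1 : LipschitzWith K fun x => Metric.infDist x A / ρ := by
          refine LipschitzWith.of_dist_le_mul fun x y => ?_
          rw [hKr, Real.dist_eq, ← sub_div, abs_div, abs_of_pos hρ0, div_eq_inv_mul, one_div]
          have := (Metric.lipschitz_infDist_pt A).dist_le_mul x y
          rw [Real.dist_eq] at this
          simp only [NNReal.coe_one, one_mul] at this
          gcongr
        have l2 : LipschitzWith K fun x : Ed d => ((n : ℝ) - ‖x‖) / ρ := by
          refine LipschitzWith.of_dist_le_mul fun x y => ?_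
          rw [hKr, Real.dist_eq, ← sub_div, abs_div, abs_of_pos hρ0, div_eq_inv_mul, one_div]
          have h2 := abs_norm_sub_norm_le y x
          rw [dist_comm, dist_eq_norm, sub_sub_sub_cancel_left]
          gcongr
        have := (l1.min_const 1).min (l2.const_max 0)
        rwa [max_self] at this
      have hgc : ∀ n, HasCompactSupport (g n) := by
        intro n
        refine HasCompactSupport.intro (isCompact_closedBall (0 : Ed d) n) fun x hx => ?_
        rw [mem_closedBall_zero_iff, not_le] at hx
        have h1 : ((n : ℝ) - ‖x‖) / ρ ≤ 0 := div_nonpos_of_nonpos_of_nonneg (by linarith) hρ0.le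
        have h2 : 0 ≤ Metric.infDist x A / ρ := div_nonneg Metric.infDist_nonneg hρ0.le
        simp only [hg]
        rw [max_eq_left h1]
        exact min_eq_right (le_min h2 zero_le_one)
      have hex := fun n : ℕ => exists_weight (g n) K (hgL n) (hgc n) (1 / ((n : ℝ) + 1))
        (by positivity)
      choose ψ h1 h2 h3 h4 using hex
      have hn : Tendsto (fun n : ℕ => (K : ℝ) * (1 / ((n : ℝ) + 1))) atTop (nhds 0) := by
        simpa using tendsto_one_div_add_atTop_nhds_zero_nat.const_mul (K : ℝ)
      have hεeq : 2 * (K : ℝ) * G * |t - 0| = ε := by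
        rw [hKr, hρ, hγ, sub_zero, abs_of_pos ht]
        field_simp
      refine mass_limit cF t S hSm ψ (fun n => (h1 n).continuous) h2 ?_
        (fun n => ((K : ℝ) * (1 / ((n : ℝ) + 1))) * √(mass F 0).toReal + 2 * K * G * |t - 0|)
        ε ?_ ?_
      · intro x hx
        have hx' : ρ ≤ Metric.infDist x A := not_lt.1 hx
        have hz : Tendsto (fun n => ψ n x - 1) atTop (nhds 0) := by
          refine squeeze_zero_norm' ?_ hn
          filter_upwards [eventually_ge_atTop ⌈‖x‖ + ρ⌉₊] with n hnx
          have hnx' := Nat.ceil_le.1 hnx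
          have hx1 : 1 ≤ ((n : ℝ) - ‖x‖) / ρ := by
            rw [le_div_iff₀ hρ0]; linarith
          have hx2 : 1 ≤ Metric.infDist x A / ρ := by
            rw [le_div_iff₀ hρ0]; linarith
          have hgx : g n x = 1 := by
            simp only [hg]
            rw [min_eq_right hx2, min_eq_left (hx1.trans (le_max_right _ _))]
          have := h4 n x
          rwa [hgx] at this
        simpa using hz.add_const 1
      · rw [hεeq]
        simpa using (hn.mul_const √(mass F 0).toReal).add_const ε
      · intro n
        have e1 := flux_estimate hF (ψ n) K (h1 n) (h2 n) (h3 n) 0 t G hG0 (fun s _ => hGt s)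
          0 t ⟨le_rfl, ht.le⟩ ⟨ht.le, le_rfl⟩
        have e2 := weighted_le cF 0 (hfin 0) (ψ n) (h1 n).continuous
          ((K : ℝ) * (1 / ((n : ℝ) + 1))) (by positivity) (by
            intro x hx
            have hxA : x ∈ A := hsupp hx
            have hgx : g n x = 0 := by
              simp only [hg]
              rw [Metric.infDist_zero_of_mem hxA, zero_div, min_eq_left zero_le_one]
              exact min_eq_left (le_max_left _ _)
            have := h4 n x
            rwa [hgx, sub_zero] at this)
        linarith
  have hintg : ∫ x in S, ‖u t x‖ ^ 2 ≤ ε ^ 2 := by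
    rw [integral_eq_lintegral_of_nonneg_ae (Eventually.of_forall fun x => by positivity)
      ((mass_integrable cF (hfin t)).aestronglyMeasurable.restrict)]
    refine ENNReal.toReal_le_of_le_ofReal (by positivity) (le_trans (le_of_eq ?_) key)
    refine lintegral_congr fun x => ?_
    rw [ENNReal.ofReal_pow (norm_nonneg _), ofReal_norm]
  change (∫ x in S, ‖u t x‖ ^ 2) ^ (1 / 2 : ℝ) ≤ ε
  rw [← Real.sqrt_eq_rpow, Real.sqrt_le_left hε.le]
  exact hintg
end
end

section
/- (Asymptotic additivity of the energy under translation.) Let d ≥ 1, λ ∈ ℝ, σ > 0, and define the energy functional E(f) = (1/2)∫_{ℝ^d} |∇f(x)|² dx − (λ/(σ+2))∫_{ℝ^d} |f(x)|^{σ+2} dx for f ∈ 𝒮(ℝ^d; ℂ). Then for all u₀, v₀ ∈ 𝒮(ℝ^d; ℂ), E(u₀ + v₀(· − y)) → E(u₀) + E(v₀) as |y| → ∞. In particular, if E(u₀) > 0 and E(v₀) > 0, then there exists D > 0 such that E(u₀ + v₀(· − y)) > 0 for all y ∈ ℝ^d with |y| > D. -/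
open MeasureTheory Filter
open scoped RealInnerProductSpace

noncomputable section

/-- The energy functional `E(f) = ½∫|∇f|² − (λ/(σ+2))∫|f|^{σ+2}`. -/
def energy {d : ℕ} (lam σ : ℝ) (f : Ed d → ℂ) : ℝ :=
  (1 / 2) * (∫ x, gradNormSq f x) - (lam / (σ + 2)) * ∫ x, ‖f x‖ ^ (σ + 2)

theorem abs_rpow_sub_le_aux {p B s t : ℝ} (hp : 1 ≤ p) (hs : s ∈ Set.Icc 0 B)
    (ht : t ∈ Set.Icc 0 B) : |s ^ p - t ^ p| ≤ p * B ^ (p - 1) * |s - t| := by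
  have := (convex_Icc (0 : ℝ) B).norm_image_sub_le_of_norm_hasDerivWithin_le
    (f := fun x : ℝ => x ^ p) (f' := fun x => p * x ^ (p - 1)) (C := p * B ^ (p - 1))
    (fun x _ => (Real.hasDerivAt_rpow_const (Or.inr hp)).hasDerivWithinAt)
    (fun x hx => by
      have h0 : 0 ≤ x ^ (p - 1) := Real.rpow_nonneg hx.1 _
      rw [Real.norm_eq_abs, abs_of_nonneg (by positivity)]
      have := Real.rpow_le_rpow hx.1 hx.2 (by linarith : 0 ≤ p - 1)
      gcongr) ht hs
  simpa using this

theorem memLp_shift_aux {d : ℕ} (g : SchwartzMap (Ed d) ℂ) (y : Ed d) (p : ENNReal) :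
    MemLp (fun x => g (x - y)) p volume :=
  (g.memLp p volume).comp_measurePreserving (measurePreserving_sub_right volume y)

theorem integrable_rpow_aux {d : ℕ} {p : ℝ} (hp : 1 ≤ p) {f : Ed d → ℂ}
    (hf : MemLp f (ENNReal.ofReal p) volume) : Integrable (fun x => ‖f x‖ ^ p) := by
  have := hf.integrable_norm_rpow (by simp; linarith) (by simp)
  rwa [ENNReal.toReal_ofReal (by linarith)] at this

theorem tendsto_rpow_aux {d : ℕ} {p : ℝ} (hp : 1 ≤ p) (f g : SchwartzMap (Ed d) ℂ) :
    Tendsto (fun y : Ed d => ∫ x, ‖f x + g (x - y)‖ ^ p)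
      (comap (fun y : Ed d => ‖y‖) atTop)
      (nhds ((∫ x, ‖f x‖ ^ p) + ∫ x, ‖g x‖ ^ p)) := by
  have hp0 : 0 < p := by linarith
  have hF := integrable_rpow_aux hp (f.memLp (ENNReal.ofReal p) volume)
  have hG := fun y => integrable_rpow_aux hp (memLp_shift_aux g y (ENNReal.ofReal p))
  have hS := fun y => integrable_rpow_aux hp
    ((f.memLp (ENNReal.ofReal p) volume).add (memLp_shift_aux g y (ENNReal.ofReal p)))
  simp only [Pi.add_apply] at hS
  set A := ‖f.toBoundedContinuousFunction‖
  set C := ‖g.toBoundedContinuousFunction‖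
  have hA : ∀ x, ‖f x‖ ≤ A := fun x => f.toBoundedContinuousFunction.norm_coe_le_norm x
  have hC : ∀ x, ‖g x‖ ≤ C := fun x => g.toBoundedContinuousFunction.norm_coe_le_norm x
  have hA0 : 0 ≤ A := norm_nonneg _
  have hC0 : 0 ≤ C := norm_nonneg _
  have key : Tendsto (fun y : Ed d => ∫ x, (‖f x + g (x - y)‖ ^ p - ‖g (x - y)‖ ^ p))
      (comap (fun y : Ed d => ‖y‖) atTop) (nhds (∫ x, ‖f x‖ ^ p)) := by
    refine tendsto_integral_filter_of_dominated_convergence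
      (fun x => p * (A + C) ^ (p - 1) * ‖f x‖) ?_ ?_ ?_ ?_
    · exact Eventually.of_forall fun y => ((hS y).sub (hG y)).aestronglyMeasurable
    · refine Eventually.of_forall fun y => Eventually.of_forall fun x => ?_
      rw [Real.norm_eq_abs]
      refine (abs_rpow_sub_le_aux (B := A + C) hp ⟨norm_nonneg _, ?_⟩
        ⟨norm_nonneg _, ?_⟩).trans ?_
      · exact (norm_add_le _ _).trans (add_le_add (hA _) (hC _))
      · linarith [hC (x - y)]
      · refine mul_le_mul_of_nonneg_left ?_ (by positivity)
        simpa using abs_norm_sub_norm_le (f x + g (x - y)) (g (x - y))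
    · exact (f.integrable (μ := volume)).norm.const_mul _
    · refine Eventually.of_forall fun x => ?_
      have h1 : Tendsto (fun y : Ed d => g (x - y)) (comap (fun y : Ed d => ‖y‖) atTop)
          (nhds 0) := by
        have h0 : Tendsto (fun y : Ed d => x - y) (comap (fun y : Ed d => ‖y‖) atTop)
            (cocompact (Ed d)) := by
          rw [← Metric.cobounded_eq_cocompact, ← comap_norm_atTop, tendsto_comap_iff]
          refine tendsto_atTop_mono (f := fun y => ‖y‖ - ‖x‖) (fun y => ?_)
            (tendsto_atTop_add_const_right _ (-‖x‖) tendsto_comap)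
          have := norm_sub_norm_le y x
          rw [norm_sub_rev] at this
          exact this
        exact g.tendsto_cocompact.comp h0
      have h2 : Tendsto (fun y : Ed d => ‖f x + g (x - y)‖ ^ p)
          (comap (fun y : Ed d => ‖y‖) atTop) (nhds (‖f x + 0‖ ^ p)) :=
        ((tendsto_const_nhds.add h1).norm).rpow_const (Or.inr hp0.le)
      have h3 : Tendsto (fun y : Ed d => ‖g (x - y)‖ ^ p)
          (comap (fun y : Ed d => ‖y‖) atTop) (nhds (‖(0 : ℂ)‖ ^ p)) :=
        h1.norm.rpow_const (Or.inr hp0.le)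
      have h4 := h2.sub h3
      simpa [Real.zero_rpow hp0.ne'] using h4
  refine (key.add_const (∫ x, ‖g x‖ ^ p)).congr fun y => ?_
  rw [integral_sub (hS y) (hG y), integral_sub_right_eq_self (fun x => ‖g x‖ ^ p) y]
  ring

open LineDeriv in
theorem tendsto_grad_aux {d : ℕ} (f g : SchwartzMap (Ed d) ℂ) :
    Tendsto (fun y : Ed d => ∫ x, gradNormSq (fun x => f x + g (x - y)) x)
      (comap (fun y : Ed d => ‖y‖) atTop)
      (nhds ((∫ x, gradNormSq f x) + ∫ x, gradNormSq g x)) := by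
  have h2 : (1 : ℝ) ≤ 2 := by norm_num
  have e0 : ∀ (f : SchwartzMap (Ed d) ℂ) (x : Ed d),
      gradNormSq f x = ∑ i, ‖(∂_{(stdBasis i : Ed d)} f : SchwartzMap (Ed d) ℂ) x‖ ^ (2 : ℝ) := by
    intro f x
    simp [gradNormSq, pd, SchwartzMap.lineDerivOp_apply_eq_fderiv]
  have e1 : ∀ y x, gradNormSq (fun x => f x + g (x - y)) x =
      ∑ i, ‖(∂_{(stdBasis i : Ed d)} f : SchwartzMap (Ed d) ℂ) x +
        (∂_{(stdBasis i : Ed d)} g : SchwartzMap (Ed d) ℂ) (x - y)‖ ^ (2 : ℝ) := by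
    intro y x
    have hd : fderiv ℝ (fun x => f x + g (x - y)) x = fderiv ℝ f x + fderiv ℝ g (x - y) := by
      have hg : DifferentiableAt ℝ (fun x => g (x - y)) x :=
        g.differentiableAt.comp x (differentiableAt_id.sub_const y)
      rw [fderiv_fun_add f.differentiableAt hg, fderiv_comp_sub]
    simp [gradNormSq, pd, SchwartzMap.lineDerivOp_apply_eq_fderiv, hd]
  have i0 : ∀ f : SchwartzMap (Ed d) ℂ, ∫ x, gradNormSq f x =
      ∑ i, ∫ x, ‖(∂_{(stdBasis i : Ed d)} f : SchwartzMap (Ed d) ℂ) x‖ ^ (2 : ℝ) := by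
    intro f
    simp_rw [e0]
    exact integral_finsetSum _ fun i _ => integrable_rpow_aux h2 (SchwartzMap.memLp _ _ volume)
  have i1 : ∀ y, ∫ x, gradNormSq (fun x => f x + g (x - y)) x =
      ∑ i, ∫ x, ‖(∂_{(stdBasis i : Ed d)} f : SchwartzMap (Ed d) ℂ) x +
        (∂_{(stdBasis i : Ed d)} g : SchwartzMap (Ed d) ℂ) (x - y)‖ ^ (2 : ℝ) := by
    intro y
    simp_rw [e1]
    refine integral_finsetSum _ fun i _ => ?_
    have hm := (SchwartzMap.memLp (∂_{(stdBasis i : Ed d)} f : SchwartzMap (Ed d) ℂ)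
      (ENNReal.ofReal 2) volume).add
      (memLp_shift_aux (∂_{(stdBasis i : Ed d)} g : SchwartzMap (Ed d) ℂ) y (ENNReal.ofReal 2))
    have hi := integrable_rpow_aux h2 hm
    simp only [Pi.add_apply] at hi
    exact hi
  simp_rw [i1, i0, ← Finset.sum_add_distrib]
  exact tendsto_finsetSum _ fun i _ => tendsto_rpow_aux h2 _ _

/-- Asymptotic additivity of the energy under translation:
`E(u₀ + v₀(·−y)) → E(u₀) + E(v₀)` as `|y| → ∞`; in particular, if both energies are
positive then the concatenation has positive energy for all sufficiently large `|y|`. -/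
theorem energy_asymptotic_additivity
    {d : ℕ} (hd : 1 ≤ d) (lam σ : ℝ) (hσ : 0 < σ)
    (u₀ v₀ : SchwartzMap (Ed d) ℂ) :
    Tendsto (fun y : Ed d => energy lam σ (fun x => u₀ x + v₀ (x - y)))
        (comap (fun y : Ed d => ‖y‖) atTop)
        (nhds (energy lam σ (⇑u₀) + energy lam σ (⇑v₀))) ∧
      (0 < energy lam σ (⇑u₀) → 0 < energy lam σ (⇑v₀) →
        ∃ D : ℝ, 0 < D ∧ ∀ y : Ed d, D < ‖y‖ →
          0 < energy lam σ (fun x => u₀ x + v₀ (x - y))) := by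
  have main : Tendsto (fun y : Ed d => energy lam σ (fun x => u₀ x + v₀ (x - y)))
        (comap (fun y : Ed d => ‖y‖) atTop)
        (nhds (energy lam σ (⇑u₀) + energy lam σ (⇑v₀))) := by
    have h := ((tendsto_grad_aux u₀ v₀).const_mul (1 / 2)).sub
      ((tendsto_rpow_aux (p := σ + 2) (by linarith) u₀ v₀).const_mul (lam / (σ + 2)))
    have e : energy lam σ (⇑u₀) + energy lam σ (⇑v₀) =
        1 / 2 * ((∫ x, gradNormSq u₀ x) + ∫ x, gradNormSq v₀ x) -
        lam / (σ + 2) * ((∫ x, ‖u₀ x‖ ^ (σ + 2)) + ∫ x, ‖v₀ x‖ ^ (σ + 2)) := by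
      unfold energy
      ring
    rw [e]
    exact h
  refine ⟨main, fun hu hv => ?_⟩
  have hev := main.eventually (lt_mem_nhds (add_pos hu hv))
  rw [eventually_comap] at hev
  obtain ⟨D, hD⟩ := eventually_atTop.1 hev
  exact ⟨max D 1, by positivity, fun y hy =>
    hD ‖y‖ ((le_max_left _ _).trans hy.le) y rfl⟩
end
end
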